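/- Every root r ∈ rad(D) can be written as r = Σ_{i=1}^{26} α_i ρ_i with all coefficients α_i ∈ ℤ[ξ]; consequently ⟨ρ̄, r⟩/|ρ̄|² = Σ_i α_i, so the height ht(r) is the absolute value of an algebraic integer in ℤ[ξ]. -/

import Mathlib

noncomputable section

open ComplexConjugate

namespace Bimonster

/-- The primitive cube root of unity `ω = e^{2πi/3}`. -/
def ω : ℂ := Complex.exp (2 * (Real.pi : ℂ) * Complex.I / 3)

/-- `θ = ω - ω̄ = √-3`. -/
def θ : ℂ := ω - conj ω

/-- `ξ = e^{-πi/6}`. -/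
def ξ : ℂ := Complex.exp (-((Real.pi : ℂ) * Complex.I) / 6)

/-- Membership in the ring of Eisenstein integers `ℰ = ℤ[ω] ⊆ ℂ`. -/
def EisP (z : ℂ) : Prop := ∃ a b : ℤ, z = (a : ℂ) + (b : ℂ) * ω

/-- The units of the ring of Eisenstein integers. -/
def EisUnit (z : ℂ) : Prop :=
  z = 1 ∨ z = -1 ∨ z = ω ∨ z = -ω ∨ z = ω ^ 2 ∨ z = -ω ^ 2

/-- The underlying 14-dimensional complex vector space of `L = 3E₈ ⊕ H`. -/
abbrev V : Type := Fin 14 → ℂ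

/-- The Hermitian form of `L = 3E₈ ⊕ H`: negative definite standard form on the twelve
`E₈`-coordinates, and the hyperbolic cell with Gram matrix `[[0, θ̄], [θ, 0]]` on the
last two coordinates.  It is conjugate-linear in the first variable. -/
def herm (u v : V) : ℂ :=
  -(∑ i : Fin 12, conj (u (Fin.castLE (by norm_num) i)) * v (Fin.castLE (by norm_num) i)) +
    conj (u 12) * conj θ * v 13 + conj (u 13) * θ * v 12

/-- First generator of the ternary tetracode `𝒞₄ ⊆ 𝔽₃⁴`. -/
def tet1 : Fin 4 → ℤ := ![1, 1, -1, 0]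

/-- Second generator of the ternary tetracode `𝒞₄ ⊆ 𝔽₃⁴`. -/
def tet2 : Fin 4 → ℤ := ![0, 1, 1, 1]

/-- The complex `E₈` lattice: vectors of `ℰ⁴` whose reduction mod `θ` lies in the
ternary tetracode. -/
def inE8 (w : Fin 4 → ℂ) : Prop :=
  (∀ i, EisP (w i)) ∧
    ∃ s t : ℤ, ∀ i : Fin 4, ∃ a b : ℤ,
      w i - ((tet1 i * s + tet2 i * t : ℤ) : ℂ) = θ * ((a : ℂ) + (b : ℂ) * ω)

/-- The lattice `L = 3E₈ ⊕ H` as a subset of `ℂ¹⁴`. -/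
def Lset : Set V :=
  {v | (∀ k : Fin 3,
      inE8 fun i : Fin 4 =>
        v ⟨4 * (k : ℕ) + (i : ℕ), by have hk := k.isLt; have hi := i.isLt; omega⟩) ∧
    EisP (v 12) ∧ EisP (v 13)}

/-- A root of `L`: a primitive lattice vector of norm `-3`. -/
def IsRoot (r : V) : Prop :=
  r ∈ Lset ∧ herm r r = -3 ∧
    ∀ α : ℂ, EisP α → ∀ y ∈ Lset, r = α • y → EisUnit α

/-- The `μ`-reflection in a vector `r`: `v ↦ v − (1−μ)·r·⟨r,v⟩/|r|²`. -/
def reflMap (μ : ℂ) (r v : V) : V := v - ((1 - μ) * herm r v / herm r r) • r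

/-- The automorphism group of the lattice `L`: invertible `ℂ`-linear maps preserving
the lattice and the Hermitian form. -/
def AutL : Subgroup (V ≃ₗ[ℂ] V) where
  carrier := {g | (∀ v : V, v ∈ Lset ↔ g v ∈ Lset) ∧ ∀ u v : V, herm (g u) (g v) = herm u v}
  one_mem' := ⟨fun _ => Iff.rfl, fun _ _ => rfl⟩
  mul_mem' := by
    rintro f g ⟨hf1, hf2⟩ ⟨hg1, hg2⟩
    refine ⟨fun v => ?_, fun u v => ?_⟩
    · exact (hg1 v).trans (hf1 (g v))
    · exact (hf2 (g u) (g v)).trans (hg2 u v)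
  inv_mem' := by
    rintro g ⟨hg1, hg2⟩
    refine ⟨fun v => ?_, fun u v => ?_⟩
    · have h := hg1 (g.symm v)
      have hv : g (g.symm v) = v := g.apply_symm_apply v
      rw [hv] at h
      exact h.symm
    · have h := hg2 (g.symm u) (g.symm v)
      have hu : g (g.symm u) = u := g.apply_symm_apply u
      have hv : g (g.symm v) = v := g.apply_symm_apply v
      rw [hu, hv] at h
      exact h.symm

/-- The set of elements of `Aut(L)` acting as the `ω`-reflection in some root
belonging to `S`. -/
def ReflAutos (S : Set V) : Set (V ≃ₗ[ℂ] V) :=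
  {g | g ∈ AutL ∧ ∃ r ∈ S, ∀ v, g v = reflMap ω r v}

/-- The reflection group `R(L)`: the subgroup of `Aut(L)` generated by the
`ω`-reflections in all roots of `L`. -/
def RL : Subgroup (V ≃ₗ[ℂ] V) := Subgroup.closure (ReflAutos {r | IsRoot r})

/-- Two roots are adjacent when `|⟨a,b⟩| = √3`, i.e. when their `ω`-reflections braid. -/
def Adj (a b : V) : Prop := ‖herm a b‖ = Real.sqrt 3

/-- A set of roots is connected if the graph given by adjacency on it is connected. -/
def ConnectedSet (Φ : Set V) : Prop :=
  ∀ a ∈ Φ, ∀ b ∈ Φ, Relation.ReflTransGen (fun x y => x ∈ Φ ∧ y ∈ Φ ∧ Adj x y) a b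

/-- `Rad Φ` is the radical of a set `Φ` of roots: the closure of `Φ` under reflecting
members of the set in each other (and identification of unit multiples). -/
inductive Rad (Φ : Set V) : V → Prop
  | base {r : V} : r ∈ Φ → Rad Φ r
  | refl {a b : V} : Rad Φ a → Rad Φ b → Rad Φ (reflMap ω a b)
  | inv {a b : V} : Rad Φ a → Rad Φ b → Rad Φ (reflMap (conj ω) a b)
  | unit {u : ℂ} {r : V} : EisUnit u → Rad Φ r → Rad Φ (u • r)

/-- Shorthand for the entry `-θω²` occurring in the coordinates of the 26 roots. -/
def qc : ℂ := -(θ * ω ^ 2)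

/- The 26 roots of the diagram `D` in the coordinate system `3E₈ ⊕ H`. -/

def rA : V := ![0, 0, 0, 0, 0, 0, 0, 0, 0, 0, 0, 0, 1, ω ^ 2]
def rC1 : V := ![qc, 0, 0, 0, 0, 0, 0, 0, 0, 0, 0, 0, 0, 0]
def rC2 : V := ![0, 0, 0, 0, qc, 0, 0, 0, 0, 0, 0, 0, 0, 0]
def rC3 : V := ![0, 0, 0, 0, 0, 0, 0, 0, qc, 0, 0, 0, 0, 0]
def rE1 : V := ![0, qc, 0, 0, 0, 0, 0, 0, 0, 0, 0, 0, 0, 0]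
def rE2 : V := ![0, 0, 0, 0, 0, qc, 0, 0, 0, 0, 0, 0, 0, 0]
def rE3 : V := ![0, 0, 0, 0, 0, 0, 0, 0, 0, qc, 0, 0, 0, 0]
def rA1 : V := ![0, 0, 0, 0, 0, 0, 0, qc, 0, 0, 0, qc, ω, ω ^ 2]
def rA2 : V := ![0, 0, 0, qc, 0, 0, 0, 0, 0, 0, 0, qc, ω, ω ^ 2]
def rA3 : V := ![0, 0, 0, qc, 0, 0, 0, qc, 0, 0, 0, 0, ω, ω ^ 2]
def rG1 : V := ![0, 0, 0, qc, 0, 0, -qc, qc, 0, 0, -qc, qc, 2 * ω, 2 * ω ^ 2]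
def rG2 : V := ![0, 0, -qc, qc, 0, 0, 0, qc, 0, 0, -qc, qc, 2 * ω, 2 * ω ^ 2]
def rG3 : V := ![0, 0, -qc, qc, 0, 0, -qc, qc, 0, 0, 0, qc, 2 * ω, 2 * ω ^ 2]
def rF : V := ![0, 1, 1, -2, 0, 1, 1, -2, 0, 1, 1, -2, -2 + ω, -θ]
def rB1 : V := ![1, 0, 1, -1, 0, 0, 0, 0, 0, 0, 0, 0, -1, 0]
def rB2 : V := ![0, 0, 0, 0, 1, 0, 1, -1, 0, 0, 0, 0, -1, 0]
def rB3 : V := ![0, 0, 0, 0, 0, 0, 0, 0, 1, 0, 1, -1, -1, 0]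
def rD1 : V := ![1, 1, -1, 0, 0, 0, 0, 0, 0, 0, 0, 0, 0, 0]
def rD2 : V := ![0, 0, 0, 0, 1, 1, -1, 0, 0, 0, 0, 0, 0, 0]
def rD3 : V := ![0, 0, 0, 0, 0, 0, 0, 0, 1, 1, -1, 0, 0, 0]
def rF1 : V := ![0, 1, 1, 1, 0, 0, 0, 0, 0, 0, 0, 0, 0, 0]
def rF2 : V := ![0, 0, 0, 0, 0, 1, 1, 1, 0, 0, 0, 0, 0, 0]
def rF3 : V := ![0, 0, 0, 0, 0, 0, 0, 0, 0, 1, 1, 1, 0, 0]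
def rZ1 : V := ![0, 1, 1, -2, 1, 0, 1, -1, 1, 0, 1, -1, qc, -θ]
def rZ2 : V := ![1, 0, 1, -1, 0, 1, 1, -2, 1, 0, 1, -1, qc, -θ]
def rZ3 : V := ![1, 0, 1, -1, 1, 0, 1, -1, 0, 1, 1, -2, qc, -θ]

/-- The 13 roots of `D` labelled by the points of `P²(𝔽₃)`. -/
def pt : Fin 13 → V :=
  ![rA, rC1, rC2, rC3, rE1, rE2, rE3, rA1, rA2, rA3, rG1, rG2, rG3]

/-- The 13 roots of `D` labelled by the lines of `P²(𝔽₃)`. -/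
def lnr : Fin 13 → V :=
  ![rF, rB1, rB2, rB3, rD1, rD2, rD3, rF1, rF2, rF3, rZ1, rZ2, rZ3]

/-- The 26 roots of the diagram `D` (the incidence graph of `P²(𝔽₃)`). -/
def D26 : Set V := Set.range pt ∪ Set.range lnr

/-- The 16 roots forming the `M₆₆₆` diagram. -/
def M16 : Set V :=
  Set.range
    (![rA, rB1, rB2, rB3, rC1, rC2, rC3, rD1, rD2, rD3, rE1, rE2, rE3, rF1, rF2, rF3] :
      Fin 16 → V)

/-- The 26 vectors `(ρ₁,…,ρ₂₆) = (x₁,…,x₁₃, ξl₁,…,ξl₁₃)`. -/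
def ρv : Fin 26 → V := fun i =>
  if h : (i : ℕ) < 13 then pt ⟨(i : ℕ), h⟩
  else ξ • lnr ⟨(i : ℕ) - 13, by have := i.isLt; omega⟩

/-- The Weyl vector `ρ̄ = (Σ points + ξ Σ lines)/26`. -/
def ρbar : V := (26 : ℂ)⁻¹ • ((∑ i : Fin 13, pt i) + ξ • ∑ i : Fin 13, lnr i)

/-- The height of a root: `ht(r) = |⟨ρ̄, r⟩| / |ρ̄|²`. -/
def ht (r : V) : ℝ := ‖herm ρbar r‖ / ‖herm ρbar ρbar‖

/-! ### Cyclotomic constants -/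

lemma ω_eq : ω = ⟨-1/2, Real.sqrt 3 / 2⟩ := by
  have h : (2 * (Real.pi : ℂ) * Complex.I / 3) = ((Real.pi - Real.pi / 3 : ℝ) : ℂ) * Complex.I := by
    push_cast; ring
  rw [ω, h]
  apply Complex.ext
  · rw [Complex.exp_ofReal_mul_I_re, Real.cos_pi_sub, Real.cos_pi_div_three]; norm_num
  · rw [Complex.exp_ofReal_mul_I_im, Real.sin_pi_sub, Real.sin_pi_div_three]

lemma ξ_eq : ξ = ⟨Real.sqrt 3 / 2, -1/2⟩ := by
  have h : (-((Real.pi : ℂ) * Complex.I) / 6) = ((-(Real.pi / 6) : ℝ) : ℂ) * Complex.I := by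
    push_cast; ring
  rw [ξ, h]
  apply Complex.ext
  · rw [Complex.exp_ofReal_mul_I_re, Real.cos_neg, Real.cos_pi_div_six]
  · rw [Complex.exp_ofReal_mul_I_im, Real.sin_neg, Real.sin_pi_div_six]; norm_num

lemma sqrt3_mul : Real.sqrt 3 * Real.sqrt 3 = 3 := Real.mul_self_sqrt (by norm_num)

lemma ω_sq : ω ^ 2 = -1 - ω := by
  have := sqrt3_mul
  rw [ω_eq, pow_two]
  apply Complex.ext
  · simp; linarith
  · simp; linarith

lemma conj_ω : conj ω = -1 - ω := by
  rw [ω_eq]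
  apply Complex.ext
  · simp; norm_num
  · simp

lemma θ_eq : θ = 1 + 2 * ω := by rw [θ, conj_ω]; ring

lemma conj_θ : conj θ = -1 - 2 * ω := by
  rw [θ_eq, map_add, map_mul, conj_ω, map_one, map_ofNat]; ring

lemma qc_eq : qc = -1 + ω := by
  rw [qc, θ_eq]; linear_combination (-1 - 2 * ω) * ω_sq + 2 * ω_sq

lemma ξ_sq : ξ ^ 2 = -ω := by
  have := sqrt3_mul
  rw [ξ_eq, ω_eq, pow_two]
  apply Complex.ext
  · simp; linarith
  · simp; linarith

lemma conj_ξ_mul : conj ξ * ξ = 1 := by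
  have := sqrt3_mul
  rw [ξ_eq]
  apply Complex.ext
  · simp; linarith
  · simp; linarith

lemma conj_ξ_mul' : conj ξ * (1 - ω) = (Real.sqrt 3 : ℂ) := by
  have := sqrt3_mul
  rw [ξ_eq, ω_eq]
  apply Complex.ext
  · simp; linarith
  · simp; linarith

/-- The ring `ℤ[ξ]`. -/
abbrev R : Subring ℂ := Subring.closure ({ξ} : Set ℂ)

lemma ξ_mem : ξ ∈ R := Subring.subset_closure rfl

lemma ω_mem : ω ∈ R := by
  have h : ω = -(ξ ^ 2) := by rw [ξ_sq]; ring
  rw [h]; exact R.neg_mem (R.pow_mem ξ_mem 2)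

lemma ω_cube : ω ^ 3 = 1 := by linear_combination (ω - 1) * ω_sq

lemma conj_ξ_eq : conj ξ = -(ξ * ω ^ 2) := by
  linear_combination (-ω ^ 2 * ξ) * conj_ξ_mul + conj ξ * ω ^ 2 * ξ_sq - conj ξ * ω_cube

lemma conj_ξ_mem : conj ξ ∈ R := by
  rw [conj_ξ_eq]
  exact R.neg_mem (R.mul_mem ξ_mem (R.pow_mem ω_mem 2))

lemma conj_mem {z : ℂ} (hz : z ∈ R) : conj z ∈ R := by
  have h : R ≤ R.comap (starRingEnd ℂ) := by
    rw [R, Subring.closure_le]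
    rintro x rfl
    exact conj_ξ_mem
  exact h hz

/-! ### The Hermitian form -/

lemma herm_add_left (u v w : V) : herm (u + v) w = herm u w + herm v w := by
  simp only [herm, Pi.add_apply, map_add, add_mul, Finset.sum_add_distrib]; ring

lemma herm_add_right (u v w : V) : herm u (v + w) = herm u v + herm u w := by
  simp only [herm, Pi.add_apply, mul_add, Finset.sum_add_distrib]; ring

lemma herm_smul_left (c : ℂ) (u v : V) : herm (c • u) v = conj c * herm u v := by
  simp only [herm, Pi.smul_apply, smul_eq_mul, map_mul, mul_assoc, ← Finset.mul_sum]; ring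

lemma herm_smul_right (c : ℂ) (u v : V) : herm u (c • v) = c * herm u v := by
  simp only [herm, Pi.smul_apply, smul_eq_mul, mul_left_comm _ c, ← Finset.mul_sum]; ring

lemma herm_zero_left (v : V) : herm 0 v = 0 := by simp [herm]

lemma herm_zero_right (v : V) : herm v 0 = 0 := by simp [herm]

lemma herm_conj (u v : V) : conj (herm u v) = herm v u := by
  simp only [herm, map_add, map_neg, map_sum, map_mul, Complex.conj_conj, mul_comm]; ring

lemma herm_sum_left {ι : Type*} (s : Finset ι) (f : ι → V) (v : V) :
    herm (∑ i ∈ s, f i) v = ∑ i ∈ s, herm (f i) v := by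
  classical
  induction s using Finset.induction_on with
  | empty => simp [herm_zero_left]
  | insert a s ha ih => rw [Finset.sum_insert ha, Finset.sum_insert ha, herm_add_left, ih]

lemma herm_sum_right {ι : Type*} (s : Finset ι) (f : ι → V) (v : V) :
    herm v (∑ i ∈ s, f i) = ∑ i ∈ s, herm v (f i) := by
  classical
  induction s using Finset.induction_on with
  | empty => simp [herm_zero_right]
  | insert a s ha ih => rw [Finset.sum_insert ha, Finset.sum_insert ha, herm_add_right, ih]

/-! ### An integer model of the Eisenstein integers, for computation -/

/-- The pair `(a, b)` stands for `a + b ω`. -/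
def φ : ℤ × ℤ →+ ℂ where
  toFun p := (p.1 : ℂ) + (p.2 : ℂ) * ω
  map_zero' := by simp
  map_add' p q := by simp; ring

lemma φ_apply (a b : ℤ) : φ (a, b) = (a : ℂ) + (b : ℂ) * ω := rfl

/-- Product of `conj p` and `q`. -/
def cmul (p q : ℤ × ℤ) : ℤ × ℤ :=
  (p.1 * q.1 - p.2 * q.1 + p.2 * q.2, p.1 * q.2 - p.2 * q.1)

lemma φ_cmul (p q : ℤ × ℤ) : φ (cmul p q) = conj (φ p) * φ q := by
  obtain ⟨a, b⟩ := p
  obtain ⟨c, d⟩ := q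
  simp only [cmul, φ_apply, map_add, map_mul, map_intCast, conj_ω]
  push_cast
  linear_combination (b * d : ℂ) * ω_sq

/-- The Hermitian form in the integer model. -/
def hermZ (u v : Fin 14 → ℤ × ℤ) : ℤ × ℤ :=
  -(∑ i : Fin 12, cmul (u (Fin.castLE (by norm_num) i)) (v (Fin.castLE (by norm_num) i))) +
    cmul (u 12) (cmul (1, 2) (v 13)) + cmul (u 13) (cmul (-1, -2) (v 12))

lemma herm_φ (u v : Fin 14 → ℤ × ℤ) :
    herm (fun k => φ (u k)) (fun k => φ (v k)) = φ (hermZ u v) := by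
  have h1 : φ (1, 2) = θ := by rw [θ_eq, φ_apply]; norm_num
  have h2 : conj (φ (-1, -2)) = θ := by
    rw [φ_apply, θ_eq, map_add, map_mul, map_intCast, map_intCast, conj_ω]; push_cast; ring
  simp only [hermZ, herm, map_add, map_neg, map_sum, φ_cmul, h1, h2]
  ring

/-- Integer coordinates of the point roots. -/
def ptZ : Fin 13 → Fin 14 → ℤ × ℤ :=
  let q : ℤ × ℤ := (-1, 1)
  let w : ℤ × ℤ := (0, 1)
  let x : ℤ × ℤ := (-1, -1)
  ![![0, 0, 0, 0, 0, 0, 0, 0, 0, 0, 0, 0, (1, 0), x],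
    ![q, 0, 0, 0, 0, 0, 0, 0, 0, 0, 0, 0, 0, 0],
    ![0, 0, 0, 0, q, 0, 0, 0, 0, 0, 0, 0, 0, 0],
    ![0, 0, 0, 0, 0, 0, 0, 0, q, 0, 0, 0, 0, 0],
    ![0, q, 0, 0, 0, 0, 0, 0, 0, 0, 0, 0, 0, 0],
    ![0, 0, 0, 0, 0, q, 0, 0, 0, 0, 0, 0, 0, 0],
    ![0, 0, 0, 0, 0, 0, 0, 0, 0, q, 0, 0, 0, 0],
    ![0, 0, 0, 0, 0, 0, 0, q, 0, 0, 0, q, w, x],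
    ![0, 0, 0, q, 0, 0, 0, 0, 0, 0, 0, q, w, x],
    ![0, 0, 0, q, 0, 0, 0, q, 0, 0, 0, 0, w, x],
    ![0, 0, 0, q, 0, 0, (1, -1), q, 0, 0, (1, -1), q, (0, 2), (-2, -2)],
    ![0, 0, (1, -1), q, 0, 0, 0, q, 0, 0, (1, -1), q, (0, 2), (-2, -2)],
    ![0, 0, (1, -1), q, 0, 0, (1, -1), q, 0, 0, 0, q, (0, 2), (-2, -2)]]

/-- Integer coordinates of the line roots. -/
def lnZ : Fin 13 → Fin 14 → ℤ × ℤ :=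
  let q : ℤ × ℤ := (-1, 1)
  let e : ℤ × ℤ := (1, 0)
  let m : ℤ × ℤ := (-1, 0)
  let n : ℤ × ℤ := (-2, 0)
  let t : ℤ × ℤ := (-1, -2)
  ![![0, e, e, n, 0, e, e, n, 0, e, e, n, (-2, 1), t],
    ![e, 0, e, m, 0, 0, 0, 0, 0, 0, 0, 0, m, 0],
    ![0, 0, 0, 0, e, 0, e, m, 0, 0, 0, 0, m, 0],
    ![0, 0, 0, 0, 0, 0, 0, 0, e, 0, e, m, m, 0],
    ![e, e, m, 0, 0, 0, 0, 0, 0, 0, 0, 0, 0, 0],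
    ![0, 0, 0, 0, e, e, m, 0, 0, 0, 0, 0, 0, 0],
    ![0, 0, 0, 0, 0, 0, 0, 0, e, e, m, 0, 0, 0],
    ![0, e, e, e, 0, 0, 0, 0, 0, 0, 0, 0, 0, 0],
    ![0, 0, 0, 0, 0, e, e, e, 0, 0, 0, 0, 0, 0],
    ![0, 0, 0, 0, 0, 0, 0, 0, 0, e, e, e, 0, 0],
    ![0, e, e, n, e, 0, e, m, e, 0, e, m, q, t],
    ![e, 0, e, m, 0, e, e, n, e, 0, e, m, q, t],
    ![e, 0, e, m, e, 0, e, m, 0, e, e, n, q, t]]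

lemma pt_eq (i : Fin 13) : pt i = fun k => φ (ptZ i k) := by
  have h0 : φ 0 = 0 := map_zero φ
  have h1 : φ (1, 0) = 1 := by rw [φ_apply]; simp
  have h2 : φ (0, 1) = ω := by rw [φ_apply]; simp
  have h3 : φ (-1, -1) = ω ^ 2 := by rw [φ_apply, ω_sq]; push_cast; ring
  have h4 : φ (-1, 1) = qc := by rw [φ_apply, qc_eq]; push_cast; ring
  have h5 : φ (1, -1) = -qc := by rw [φ_apply, qc_eq]; push_cast; ring
  have h6 : φ (0, 2) = 2 * ω := by rw [φ_apply]; push_cast; ring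
  have h7 : φ (-2, -2) = 2 * ω ^ 2 := by rw [φ_apply, ω_sq]; push_cast; ring
  funext k
  fin_cases i <;> fin_cases k <;>
    first
    | exact h0.symm | exact h1.symm | exact h2.symm | exact h3.symm
    | exact h4.symm | exact h5.symm | exact h6.symm | exact h7.symm

lemma lnr_eq (i : Fin 13) : lnr i = fun k => φ (lnZ i k) := by
  have h0 : φ 0 = 0 := map_zero φ
  have h1 : φ (1, 0) = 1 := by rw [φ_apply]; simp
  have h2 : φ (-1, 0) = -1 := by rw [φ_apply]; simp
  have h3 : φ (-2, 0) = -2 := by rw [φ_apply]; simp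
  have h4 : φ (-1, 1) = qc := by rw [φ_apply, qc_eq]; push_cast; ring
  have h5 : φ (-1, -2) = -θ := by rw [φ_apply, θ_eq]; push_cast; ring
  have h6 : φ (-2, 1) = -2 + ω := by rw [φ_apply]; push_cast; ring
  funext k
  fin_cases i <;> fin_cases k <;>
    first
    | exact h0.symm | exact h1.symm | exact h2.symm | exact h3.symm
    | exact h4.symm | exact h5.symm | exact h6.symm

lemma gram_pp : ∀ i j, hermZ (ptZ i) (ptZ j) = if i = j then (-3, 0) else 0 := by
  decide +kernel

lemma gram_ll : ∀ i j, hermZ (lnZ i) (lnZ j) = if i = j then (-3, 0) else 0 := by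
  decide +kernel

lemma gram_lp : ∀ i j, hermZ (lnZ i) (ptZ j) = 0 ∨ hermZ (lnZ i) (ptZ j) = (1, -1) := by
  decide +kernel

lemma gram_lp_col : ∀ j, ∑ i, hermZ (lnZ i) (ptZ j) = (4, -4) := by
  decide +kernel

lemma gram_lp_row : ∀ i, ∑ j, hermZ (lnZ i) (ptZ j) = (4, -4) := by
  decide +kernel

lemma φ_m3 : φ (-3, 0) = -3 := by rw [φ_apply]; simp

lemma φ_44 : φ (4, -4) = 4 * (1 - ω) := by rw [φ_apply]; push_cast; ring

lemma herm_pp (i j : Fin 13) : herm (pt i) (pt j) = if i = j then -3 else 0 := by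
  rw [pt_eq, pt_eq, herm_φ, gram_pp]
  split_ifs
  · exact φ_m3
  · exact map_zero φ

lemma herm_ll (i j : Fin 13) : herm (lnr i) (lnr j) = if i = j then -3 else 0 := by
  rw [lnr_eq, lnr_eq, herm_φ, gram_ll]
  split_ifs
  · exact φ_m3
  · exact map_zero φ

lemma herm_lp (i j : Fin 13) : herm (lnr i) (pt j) = 0 ∨ herm (lnr i) (pt j) = 1 - ω := by
  rw [lnr_eq, pt_eq, herm_φ]
  rcases gram_lp i j with h | h
  · left; rw [h]; exact map_zero φ
  · right; rw [h, φ_apply]; push_cast; ring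

lemma herm_lp_col (j : Fin 13) : ∑ i, herm (lnr i) (pt j) = 4 * (1 - ω) := by
  simp only [lnr_eq, pt_eq, herm_φ]
  rw [← map_sum, gram_lp_col, φ_44]

lemma herm_lp_row (i : Fin 13) : ∑ j, herm (lnr i) (pt j) = 4 * (1 - ω) := by
  simp only [lnr_eq, pt_eq, herm_φ]
  rw [← map_sum, gram_lp_row, φ_44]

lemma herm_pl_row (i : Fin 13) : ∑ j, herm (pt j) (lnr i) = 4 * conj (1 - ω) := by
  have h := congrArg conj (herm_lp_row i)
  rw [map_sum, map_mul] at h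
  simpa only [herm_conj, map_ofNat] using h

/-! ### The Weyl vector -/

/-- The norm of the Weyl vector. -/
def wn : ℂ := (26 : ℂ)⁻¹ * (-3 + 4 * (Real.sqrt 3 : ℂ))

lemma wn_ne : wn ≠ 0 := by
  have h : wn = (((26 : ℝ)⁻¹ * (-3 + 4 * Real.sqrt 3) : ℝ) : ℂ) := by rw [wn]; push_cast; ring
  rw [h, Complex.ofReal_ne_zero]
  have h1 : 1 ≤ Real.sqrt 3 := Real.one_le_sqrt.mpr (by norm_num)
  have : 0 < -3 + 4 * Real.sqrt 3 := by linarith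
  positivity

lemma herm_ρbar_pt (i : Fin 13) : herm ρbar (pt i) = wn := by
  rw [ρbar, herm_smul_left, herm_add_left, herm_smul_left, herm_sum_left, herm_sum_left,
    herm_lp_col]
  simp only [herm_pp, Finset.sum_ite_eq', Finset.mem_univ, if_true]
  rw [wn, ← conj_ξ_mul', map_inv₀, map_ofNat]; ring

lemma herm_ρbar_lnr (i : Fin 13) : herm ρbar (ξ • lnr i) = wn := by
  have h : ξ * conj (1 - ω) = (Real.sqrt 3 : ℂ) := by
    have := congrArg conj conj_ξ_mul'
    rwa [map_mul, Complex.conj_conj, Complex.conj_ofReal] at this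
  rw [herm_smul_right, ρbar, herm_smul_left, herm_add_left, herm_smul_left, herm_sum_left,
    herm_sum_left, herm_pl_row]
  simp only [herm_ll, Finset.sum_ite_eq', Finset.mem_univ, if_true]
  rw [wn, map_inv₀, map_ofNat]
  linear_combination (4 / 26 : ℂ) * h - (3 / 26 : ℂ) * conj_ξ_mul

lemma herm_ρbar_ρbar : herm ρbar ρbar = wn := by
  have h : herm ρbar ((26 : ℂ)⁻¹ • ((∑ i : Fin 13, pt i) + ξ • ∑ i : Fin 13, lnr i)) = wn := by
    rw [herm_smul_right, herm_add_right, Finset.smul_sum, herm_sum_right, herm_sum_right]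
    simp only [herm_ρbar_pt, herm_ρbar_lnr, Finset.sum_const, Finset.card_univ, Fintype.card_fin,
      nsmul_eq_mul]
    push_cast; ring
  exact h

lemma ρv_cases (i : Fin 26) : (∃ j, ρv i = pt j) ∨ ∃ j, ρv i = ξ • lnr j := by
  by_cases h : (i : ℕ) < 13
  · left; exact ⟨⟨i, h⟩, by simp [ρv, h]⟩
  · right; exact ⟨⟨i - 13, by have := i.isLt; omega⟩, by simp [ρv, h]⟩

lemma herm_ρbar_ρv (i : Fin 26) : herm ρbar (ρv i) = wn := by
  rcases ρv_cases i with ⟨j, h⟩ | ⟨j, h⟩ <;> rw [h]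
  · exact herm_ρbar_pt j
  · exact herm_ρbar_lnr j

/-! ### The `ℤ[ξ]`-span of the roots -/

/-- The `ℤ[ξ]`-span of the vectors `ρv i`. -/
abbrev M : Submodule R V := Submodule.span R (Set.range ρv)

lemma smul_mem_M {c : ℂ} (hc : c ∈ R) {v : V} (hv : v ∈ M) : c • v ∈ M :=
  M.smul_mem (⟨c, hc⟩ : R) hv

lemma pt_mem (i : Fin 13) : pt i ∈ M := by
  apply Submodule.subset_span
  refine ⟨⟨i, by have := i.isLt; omega⟩, ?_⟩
  simp [ρv]

lemma lnr_mem (i : Fin 13) : lnr i ∈ M := by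
  have h : ξ • lnr i ∈ M := by
    apply Submodule.subset_span
    refine ⟨⟨i + 13, by have := i.isLt; omega⟩, ?_⟩
    simp [ρv]
  have h2 := smul_mem_M conj_ξ_mem h
  rwa [smul_smul, conj_ξ_mul, one_smul] at h2

/-- The ideal `θ ℤ[ξ]`. -/
def I : AddSubgroup ℂ where
  carrier := {z | ∃ c ∈ R, z = (1 - ω) * c}
  zero_mem' := ⟨0, R.zero_mem, by ring⟩
  add_mem' := by
    rintro _ _ ⟨c, hc, rfl⟩ ⟨d, hd, rfl⟩
    exact ⟨c + d, R.add_mem hc hd, by ring⟩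
  neg_mem' := by
    rintro _ ⟨c, hc, rfl⟩
    exact ⟨-c, R.neg_mem hc, by ring⟩

lemma I_mul {c z : ℂ} (hc : c ∈ R) (hz : z ∈ I) : c * z ∈ I := by
  obtain ⟨d, hd, rfl⟩ := hz
  exact ⟨c * d, R.mul_mem hc hd, by ring⟩

lemma conj_one_sub : conj (1 - ω) = (1 - ω) * (1 + ω) := by
  rw [map_sub, map_one, conj_ω]; linear_combination ω_sq

lemma I_conj {z : ℂ} (hz : z ∈ I) : conj z ∈ I := by
  obtain ⟨d, hd, rfl⟩ := hz
  refine ⟨(1 + ω) * conj d, R.mul_mem (R.add_mem R.one_mem ω_mem) (conj_mem hd), ?_⟩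
  rw [map_mul, conj_one_sub]; ring

lemma m3_mem : (-3 : ℂ) ∈ I := by
  refine ⟨-(2 + ω), R.neg_mem (R.add_mem (by exact_mod_cast natCast_mem R 2) ω_mem), ?_⟩
  linear_combination -ω_sq

lemma pp_mem (i j : Fin 13) : herm (pt i) (pt j) ∈ I := by
  rw [herm_pp]; split_ifs
  · exact m3_mem
  · exact I.zero_mem

lemma ll_mem (i j : Fin 13) : herm (lnr i) (lnr j) ∈ I := by
  rw [herm_ll]; split_ifs
  · exact m3_mem
  · exact I.zero_mem

lemma lp_mem (i j : Fin 13) : herm (lnr i) (pt j) ∈ I := by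
  rcases herm_lp i j with h | h <;> rw [h]
  · exact I.zero_mem
  · exact ⟨1, R.one_mem, by ring⟩

lemma pl_mem (i j : Fin 13) : herm (pt i) (lnr j) ∈ I := by
  rw [← herm_conj]; exact I_conj (lp_mem j i)

lemma ρρ_mem (i j : Fin 26) : herm (ρv i) (ρv j) ∈ I := by
  rcases ρv_cases i with ⟨a, ha⟩ | ⟨a, ha⟩ <;> rcases ρv_cases j with ⟨b, hb⟩ | ⟨b, hb⟩ <;>
    rw [ha, hb]
  · exact pp_mem a b
  · rw [herm_smul_right]; exact I_mul ξ_mem (pl_mem a b)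
  · rw [herm_smul_left]; exact I_mul conj_ξ_mem (lp_mem a b)
  · rw [herm_smul_left, herm_smul_right]
    exact I_mul conj_ξ_mem (I_mul ξ_mem (ll_mem a b))

lemma herm_mem {u v : V} (hu : u ∈ M) (hv : v ∈ M) : herm u v ∈ I := by
  induction hu using Submodule.span_induction with
  | mem x hx =>
    obtain ⟨i, rfl⟩ := hx
    induction hv using Submodule.span_induction with
    | mem y hy =>
      obtain ⟨j, rfl⟩ := hy
      exact ρρ_mem i j
    | zero => rw [herm_zero_right]; exact I.zero_mem
    | add x y _ _ hx hy => rw [herm_add_right]; exact I.add_mem hx hy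
    | smul c x _ hx =>
      have : herm (ρv i) (c • x) = (c : ℂ) * herm (ρv i) x := herm_smul_right _ _ _
      rw [this]; exact I_mul c.2 hx
  | zero => rw [herm_zero_left]; exact I.zero_mem
  | add x y _ _ hx hy => rw [herm_add_left]; exact I.add_mem hx hy
  | smul c x _ hx =>
    have : herm (c • x) v = conj (c : ℂ) * herm x v := herm_smul_left _ _ _
    rw [this]; exact I_mul (conj_mem c.2) hx

/-- The reflections `v ↦ v - (1-μ)⟨a,v⟩/|a|² a` preserve the span and the norm. -/
lemma reflMap_mem {μ : ℂ} (hμ : conj μ * μ = 1) {e : ℂ} (he : e ∈ R)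
    (hμe : (1 - μ) * (1 - ω) = 3 * e) {a b : V}
    (ha : a ∈ M ∧ herm a a = -3) (hb : b ∈ M ∧ herm b b = -3) :
    reflMap μ a b ∈ M ∧ herm (reflMap μ a b) (reflMap μ a b) = -3 := by
  obtain ⟨ha, ha'⟩ := ha
  obtain ⟨hb, hb'⟩ := hb
  constructor
  · obtain ⟨d, hd, h⟩ := herm_mem ha hb
    rw [reflMap, ha', h]
    have h2 : (1 - μ) * ((1 - ω) * d) / -3 = -(e * d) := by
      linear_combination (-d / 3) * hμe
    rw [h2]
    exact M.sub_mem hb (smul_mem_M (R.neg_mem (R.mul_mem he hd)) ha)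
  · rw [reflMap, ha', sub_eq_add_neg, ← neg_smul]
    simp only [herm_add_left, herm_add_right, herm_smul_left, herm_smul_right, ha', hb']
    rw [← herm_conj a b]
    simp only [map_neg, map_div₀, map_mul, map_sub, map_one, map_ofNat]
    linear_combination (-(herm a b * conj (herm a b)) / 3) * hμ

lemma rad_mem {r : V} (hr : Rad D26 r) : r ∈ M ∧ herm r r = -3 := by
  induction hr with
  | base h =>
    rcases h with ⟨i, rfl⟩ | ⟨i, rfl⟩
    · exact ⟨pt_mem i, by rw [herm_pp, if_pos rfl]⟩
    · exact ⟨lnr_mem i, by rw [herm_ll, if_pos rfl]⟩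
  | refl _ _ ha hb =>
    refine reflMap_mem ?_ (R.neg_mem ω_mem) ?_ ha hb
    · rw [conj_ω]; linear_combination -ω_sq
    · linear_combination ω_sq
  | inv _ _ ha hb =>
    refine reflMap_mem ?_ R.one_mem ?_ ha hb
    · rw [Complex.conj_conj, conj_ω]; linear_combination -ω_sq
    · rw [conj_ω]; linear_combination -ω_sq
  | @unit u r hu _ ih =>
    have key : u ∈ R ∧ conj u * u = 1 := by
      have h1 : conj ω * ω = 1 := by rw [conj_ω]; linear_combination -ω_sq
      have h2 : conj ω ^ 2 * ω ^ 2 = 1 := by rw [← mul_pow, h1, one_pow]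
      rcases hu with rfl | rfl | rfl | rfl | rfl | rfl
      · exact ⟨R.one_mem, by simp⟩
      · exact ⟨R.neg_mem R.one_mem, by simp⟩
      · exact ⟨ω_mem, h1⟩
      · exact ⟨R.neg_mem ω_mem, by rw [map_neg, neg_mul_neg, h1]⟩
      · exact ⟨R.pow_mem ω_mem 2, by rw [map_pow, h2]⟩
      · exact ⟨R.neg_mem (R.pow_mem ω_mem 2), by rw [map_neg, map_pow, neg_mul_neg, h2]⟩
    refine ⟨smul_mem_M key.1 ih.1, ?_⟩
    rw [herm_smul_left, herm_smul_right, ih.2, ← mul_assoc, key.2, one_mul]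

/-- Every root in `rad(D)` is a `ℤ[ξ]`-linear combination of `ρ₁,…,ρ₂₆`; consequently
`⟨ρ̄,r⟩/|ρ̄|²` is the sum of the coefficients, an algebraic integer in `ℤ[ξ]`, whose
absolute value is the height of `r`. -/
theorem stmt18 : ∀ r : V, Rad D26 r →
    ∃ α : Fin 26 → ℂ, (∀ i, α i ∈ Subring.closure ({ξ} : Set ℂ)) ∧
      r = ∑ i : Fin 26, α i • ρv i ∧
      herm ρbar r = (∑ i : Fin 26, α i) * herm ρbar ρbar ∧
      ht r = ‖∑ i : Fin 26, α i‖ := by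
  intro r hr
  obtain ⟨c, hc⟩ := (Submodule.mem_span_range_iff_exists_fun R).mp (rad_mem hr).1
  have hr' : r = ∑ i : Fin 26, (c i : ℂ) • ρv i := hc.symm
  have hw : herm ρbar r = (∑ i : Fin 26, (c i : ℂ)) * herm ρbar ρbar := by
    rw [hr', herm_sum_right, herm_ρbar_ρbar, Finset.sum_mul]
    simp only [herm_smul_right, herm_ρbar_ρv]
  refine ⟨fun i => (c i : ℂ), fun i => (c i).2, hr', hw, ?_⟩
  rw [ht, hw, norm_mul, mul_div_assoc, div_self, mul_one]
  rw [norm_ne_zero_iff, herm_ρbar_ρbar]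
  exact wn_ne

end Bimonster
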